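/- arXiv:2510.02156 — 3 statements merged into one kernel-verified Lean document; each statement's English description precedes it below -/
import Mathlib

section
/- Let r, n be positive integers, B ∈ ℝ^{r×n}, c ∈ ℝ^r, and λ̃ > 0. Let x, x⋆ ∈ ℝ^n with B x⋆ = c, and let x' = x + Bᵀ (B Bᵀ + λ̃ I_r)⁻¹ (c − B x). Then x' − x⋆ = λ̃ (Bᵀ B + λ̃ I_n)⁻¹ (x − x⋆). -/
open Matrix

theorem reg_isUnit_det {m k : ℕ} (A : Matrix (Fin m) (Fin k) ℝ) (lam : ℝ) (hlam : 0 < lam) :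
    IsUnit (Aᵀ * A + lam • (1 : Matrix (Fin k) (Fin k) ℝ)).det := by
  have h1 : (Aᵀ * A).PosSemidef := by
    simpa [conjTranspose_eq_transpose_of_trivial] using posSemidef_conjTranspose_mul_self A
  have h2 : (lam • (1 : Matrix (Fin k) (Fin k) ℝ)).PosDef := PosDef.one.smul hlam
  exact (PosDef.posSemidef_add h1 h2).det_pos.ne'.isUnit

/-- Exact error-propagation identity for the regularized block-Kaczmarz update:
if `B x⋆ = c` and `x' = x + Bᵀ (B Bᵀ + λ̃ I)⁻¹ (c − B x)`, then
`x' − x⋆ = λ̃ (Bᵀ B + λ̃ I)⁻¹ (x − x⋆)`. -/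
theorem stmt_7 (r n : ℕ) (hr : 0 < r) (hn : 0 < n)
    (B : Matrix (Fin r) (Fin n) ℝ) (c : Fin r → ℝ) (lam : ℝ) (hlam : 0 < lam)
    (x xs : Fin n → ℝ) (hxs : B *ᵥ xs = c) :
    (x + Bᵀ *ᵥ ((B * Bᵀ + lam • (1 : Matrix (Fin r) (Fin r) ℝ))⁻¹ *ᵥ (c - B *ᵥ x))) - xs =
      lam • ((Bᵀ * B + lam • (1 : Matrix (Fin n) (Fin n) ℝ))⁻¹ *ᵥ (x - xs)) := by
  subst hxs
  have hM : IsUnit (B * Bᵀ + lam • (1 : Matrix (Fin r) (Fin r) ℝ)).det := by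
    simpa using reg_isUnit_det Bᵀ lam hlam
  have hN := reg_isUnit_det B lam hlam
  have hc : (Bᵀ * B + lam • (1 : Matrix (Fin n) (Fin n) ℝ)) * Bᵀ
      = Bᵀ * (B * Bᵀ + lam • (1 : Matrix (Fin r) (Fin r) ℝ)) := by
    simp [Matrix.add_mul, Matrix.mul_add, Matrix.mul_assoc]
  set M := B * Bᵀ + lam • (1 : Matrix (Fin r) (Fin r) ℝ) with hMd
  set N := Bᵀ * B + lam • (1 : Matrix (Fin n) (Fin n) ℝ) with hNd
  have key : N * (1 - Bᵀ * (M⁻¹ * B)) = lam • 1 := by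
    rw [Matrix.mul_sub, ← Matrix.mul_assoc, hc, Matrix.mul_assoc,
      Matrix.mul_nonsing_inv_cancel_left _ _ hM, hNd]
    simp
  have key2 : 1 - Bᵀ * (M⁻¹ * B) = lam • N⁻¹ := by
    rw [← Matrix.nonsing_inv_mul_cancel_left _ (1 - Bᵀ * (M⁻¹ * B)) hN, key]
    simp
  rw [← Matrix.smul_mulVec, ← key2, ← Matrix.mulVec_sub, Matrix.sub_mulVec, Matrix.one_mulVec,
    ← Matrix.mulVec_mulVec, ← Matrix.mulVec_mulVec, ← neg_sub x xs]
  simp only [Matrix.mulVec_neg]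
  abel
end

section
/- Let r, n be positive integers, B ∈ ℝ^{r×n}, c ∈ ℝ^r, and λ̃ > 0. Let x, x⋆ ∈ ℝ^n with B x⋆ = c, and let x' = x + Bᵀ (B Bᵀ + λ̃ I_r)⁻¹ (c − B x). Suppose μ > 0 is such that ⟨v, Bᵀ B v⟩ ≥ μ ‖v‖₂² for every v orthogonal to the kernel of B, and suppose x − x⋆ is orthogonal to the kernel of B. Then ‖x' − x⋆‖₂ ≤ (λ̃ / (μ + λ̃)) · ‖x − x⋆‖₂. -/
open Matrix

/-- One-step contraction bound of Theorem 2.3: if `B x⋆ = c`,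
`x' = x + Bᵀ (B Bᵀ + λ̃ I)⁻¹ (c − B x)`, `μ > 0` is a lower bound for the Rayleigh
quotient of `Bᵀ B` on the orthogonal complement of the kernel of `B`, and `x − x⋆`
is orthogonal to the kernel of `B`, then
`‖x' − x⋆‖₂ ≤ (λ̃ / (μ + λ̃)) ‖x − x⋆‖₂`. -/
theorem stmt_9 (r n : ℕ) (hr : 0 < r) (hn : 0 < n)
    (B : Matrix (Fin r) (Fin n) ℝ) (c : Fin r → ℝ) (lam : ℝ) (hlam : 0 < lam)
    (x xs : Fin n → ℝ) (hxs : B *ᵥ xs = c)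
    (μ : ℝ) (hμ : 0 < μ)
    (hmu : ∀ v : Fin n → ℝ, (∀ w : Fin n → ℝ, B *ᵥ w = 0 → v ⬝ᵥ w = 0) →
      v ⬝ᵥ ((Bᵀ * B) *ᵥ v) ≥ μ * ‖(EuclideanSpace.equiv (Fin n) ℝ).symm v‖ ^ 2)
    (hperp : ∀ w : Fin n → ℝ, B *ᵥ w = 0 → (x - xs) ⬝ᵥ w = 0) :
    ‖(EuclideanSpace.equiv (Fin n) ℝ).symm
        ((x + Bᵀ *ᵥ ((B * Bᵀ + lam • (1 : Matrix (Fin r) (Fin r) ℝ))⁻¹ *ᵥ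
          (c - B *ᵥ x))) - xs)‖ ≤
      (lam / (μ + lam)) * ‖(EuclideanSpace.equiv (Fin n) ℝ).symm (x - xs)‖ := by
  set M := B * Bᵀ + lam • (1 : Matrix (Fin r) (Fin r) ℝ) with hM
  have hpd : M.PosDef := by
    have h1 : (B * Bᵀ).PosSemidef := by
      simpa using Matrix.posSemidef_self_mul_conjTranspose B
    have h2 : (lam • (1 : Matrix (Fin r) (Fin r) ℝ)).PosDef := Matrix.PosDef.one.smul hlam
    exact Matrix.PosDef.posSemidef_add h1 h2
  have hdet : IsUnit M.det := (Matrix.isUnit_iff_isUnit_det _).mp hpd.isUnit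
  set y := M⁻¹ *ᵥ (c - B *ᵥ x) with hy
  have hMy : M *ᵥ y = c - B *ᵥ x := by
    rw [hy, Matrix.mulVec_mulVec, Matrix.mul_nonsing_inv _ hdet, Matrix.one_mulVec]
  set d := x - xs with hd
  set e := x + Bᵀ *ᵥ y - xs with he
  have hde : e = d + Bᵀ *ᵥ y := by rw [he, hd]; abel
  have hBe : B *ᵥ e = - (lam • y) := by
    have h3 : B *ᵥ (Bᵀ *ᵥ y) + lam • y = c - B *ᵥ x := by
      rw [← hMy, hM, Matrix.add_mulVec, Matrix.mulVec_mulVec, Matrix.smul_mulVec,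
        Matrix.one_mulVec]
    rw [hde, hd, Matrix.mulVec_add, Matrix.mulVec_sub, hxs, eq_sub_of_add_eq h3]
    abel
  have heperp : ∀ w : Fin n → ℝ, B *ᵥ w = 0 → e ⬝ᵥ w = 0 := by
    intro w hw
    rw [hde, add_dotProduct, hperp w hw, Matrix.mulVec_transpose,
      ← Matrix.dotProduct_mulVec, hw]
    simp
  have h4 := hmu e heperp
  have h5 : (Bᵀ * B) *ᵥ e = lam • d - lam • e := by
    rw [← Matrix.mulVec_mulVec, hBe, hde, Matrix.mulVec_neg, Matrix.mulVec_smul, smul_add]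
    abel
  rw [h5, dotProduct_sub, dotProduct_smul, dotProduct_smul, smul_eq_mul, smul_eq_mul] at h4
  have hin : ∀ u v : Fin n → ℝ, u ⬝ᵥ v = inner ℝ ((EuclideanSpace.equiv (Fin n) ℝ).symm u)
      ((EuclideanSpace.equiv (Fin n) ℝ).symm v) := by
    intro u v
    simp [PiLp.inner_apply, dotProduct, mul_comm]
  rw [hin, hin, real_inner_self_eq_norm_sq] at h4
  have h6 := real_inner_le_norm ((EuclideanSpace.equiv (Fin n) ℝ).symm e)
    ((EuclideanSpace.equiv (Fin n) ℝ).symm d)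
  have hE := norm_nonneg ((EuclideanSpace.equiv (Fin n) ℝ).symm e)
  have hD := norm_nonneg ((EuclideanSpace.equiv (Fin n) ℝ).symm d)
  generalize ‖(EuclideanSpace.equiv (Fin n) ℝ).symm e‖ = E at *
  generalize ‖(EuclideanSpace.equiv (Fin n) ℝ).symm d‖ = D at *
  rw [div_mul_eq_mul_div, le_div_iff₀ (by positivity)]
  rcases hE.eq_or_lt with h0 | h0
  · rw [← h0]; simp; positivity
  · have h7 := mul_le_mul_of_nonneg_left h6 hlam.le
    refine le_of_mul_le_mul_left ?_ h0
    nlinarith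
end

section
/- Let r, n be positive integers, B ∈ ℝ^{r×n}, and let P ∈ ℝ^{n×r} satisfy the four Penrose conditions: B P B = B, P B P = P, (B P)ᵀ = B P, and (P B)ᵀ = P B. Let c ∈ ℝ^r and x, x⋆ ∈ ℝ^n with B x⋆ = c, and let x' = x + P (c − B x). Suppose μ > 0 is such that ‖B v‖₂² ≥ μ ‖v‖₂² for every v in the range of Bᵀ. Then ‖x' − x⋆‖₂² ≥ ‖x − x⋆‖₂² − ‖B x − c‖₂² / μ. -/
open Matrix

/-- Lower bound in equation (2.15): for the pseudoinverse update `x' = x + P (c − B x)`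
with `B x⋆ = c`, if `μ > 0` satisfies `‖B v‖₂² ≥ μ ‖v‖₂²` for every `v` in the range of
`Bᵀ`, then `‖x' − x⋆‖₂² ≥ ‖x − x⋆‖₂² − ‖B x − c‖₂² / μ`. -/
theorem stmt_13 (r n : ℕ) (hr : 0 < r) (hn : 0 < n)
    (B : Matrix (Fin r) (Fin n) ℝ) (P : Matrix (Fin n) (Fin r) ℝ)
    (h1 : B * P * B = B) (h2 : P * B * P = P)
    (h3 : (B * P)ᵀ = B * P) (h4 : (P * B)ᵀ = P * B)
    (c : Fin r → ℝ) (x xs : Fin n → ℝ) (hxs : B *ᵥ xs = c)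
    (μ : ℝ) (hμ : 0 < μ)
    (hmu : ∀ v ∈ Set.range Bᵀ.mulVec,
      ‖(EuclideanSpace.equiv (Fin r) ℝ).symm (B *ᵥ v)‖ ^ 2 ≥
        μ * ‖(EuclideanSpace.equiv (Fin n) ℝ).symm v‖ ^ 2) :
    ‖(EuclideanSpace.equiv (Fin n) ℝ).symm ((x + P *ᵥ (c - B *ᵥ x)) - xs)‖ ^ 2 ≥
      ‖(EuclideanSpace.equiv (Fin n) ℝ).symm (x - xs)‖ ^ 2 -
        ‖(EuclideanSpace.equiv (Fin r) ℝ).symm (B *ᵥ x - c)‖ ^ 2 / μ := by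
  have key : ∀ (m : ℕ) (v : Fin m → ℝ),
      ‖(EuclideanSpace.equiv (Fin m) ℝ).symm v‖ ^ 2 = v ⬝ᵥ v := by
    intro m v
    rw [EuclideanSpace.norm_sq_eq]
    simp [dotProduct, sq]
  simp only [key] at hmu ⊢
  obtain ⟨d, hd⟩ : ∃ d, d = x - xs := ⟨_, rfl⟩
  obtain ⟨w, hw⟩ : ∃ w, w = (P * B) *ᵥ d := ⟨_, rfl⟩
  have hBd : B *ᵥ x - c = B *ᵥ d := by rw [hd, mulVec_sub, hxs]
  have hBw : B *ᵥ w = B *ᵥ d := by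
    rw [hw, mulVec_mulVec, ← Matrix.mul_assoc, h1]
  have hx' : x + P *ᵥ (c - B *ᵥ x) - xs = d - w := by
    have : c - B *ᵥ x = -(B *ᵥ d) := by rw [← hBd]; abel
    rw [this, mulVec_neg, mulVec_mulVec, ← hw, hd]; abel
  have hdw : d ⬝ᵥ w = w ⬝ᵥ w := by
    have hww : (P * B) *ᵥ w = w := by
      rw [hw, mulVec_mulVec, ← Matrix.mul_assoc, h2]
    have : w ⬝ᵥ w = d ⬝ᵥ ((P * B) *ᵥ w) := by
      rw [dotProduct_mulVec, ← mulVec_transpose, h4, ← hw]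
    rw [this, hww]
  have hm := hmu w ⟨Pᵀ *ᵥ d, by
    change Bᵀ *ᵥ (Pᵀ *ᵥ d) = w
    rw [mulVec_mulVec, ← transpose_mul, h4, hw]⟩
  rw [hBw] at hm
  rw [hx', hBd, ← hd]
  have hle : w ⬝ᵥ w ≤ (B *ᵥ d) ⬝ᵥ (B *ᵥ d) / μ := by
    rw [le_div_iff₀ hμ]; linarith
  have hexp : (d - w) ⬝ᵥ (d - w) = d ⬝ᵥ d - w ⬝ᵥ w := by
    rw [sub_dotProduct, dotProduct_sub, dotProduct_sub, dotProduct_comm w d, hdw]; ring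
  rw [hexp]; linarith
end
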